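/- Let n be a positive integer, let S₁ and S₂ be n×n complex matrices, and let w : ℝ → ℂⁿ be a differentiable function satisfying w′(t) = S₁·w(t) + i·S₂·w(t) for all t ∈ ℝ. Define φ : ℝ × ℝ → ℂⁿ by φ(t,ξ) := exp(−ξ)·w(t). Then for all (t,ξ) ∈ ℝ × ℝ, the partial derivative in t satisfies ∂_t φ(t,ξ) = −∂_ξ(S₁·φ(t,ξ)) + i·S₂·φ(t,ξ), where ∂_ξ(S₁·φ(t,ξ)) denotes the partial derivative in ξ of the function ξ ↦ S₁·φ(t,ξ). -/

import Mathlib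

/-!
Multiplication by `e^{−ξ}` is constant in `t`, so it carries the equation `w′ = A w + B w` over to
`φ = e^{−ξ} w`. By homogeneity `A φ = e^{−ξ} A w`, and `∂_ξ e^{−ξ} = −e^{−ξ}`, so the term `A φ` is
`−∂_ξ (A φ)`. Schrödingerisation is the case `A = S₁`, `B = i S₂`.
-/

section Warping

variable {E : Type*} [NormedAddCommGroup E] [NormedSpace ℝ E]

theorem hasDerivAt_exp_neg_smul_const (v : E) (ξ : ℝ) :
    HasDerivAt (fun ξ' : ℝ => Real.exp (-ξ') • v) (-(Real.exp (-ξ) • v)) ξ := by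
  have h_exp : HasDerivAt (fun ξ' : ℝ => Real.exp (-ξ')) (-Real.exp (-ξ)) ξ := by
    simpa only [mul_neg_one] using (hasDerivAt_neg ξ).exp
  simpa only [neg_smul] using h_exp.smul_const v

theorem hasDerivAt_linearMap_exp_neg_smul_const {F : Type*} [AddCommGroup F] [Module ℝ F]
    (A : F →ₗ[ℝ] E) (v : F) (ξ : ℝ) :
    HasDerivAt (fun ξ' : ℝ => A (Real.exp (-ξ') • v)) (-A (Real.exp (-ξ) • v)) ξ := by
  simpa only [map_smul] using hasDerivAt_exp_neg_smul_const (A v) ξ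

theorem schrodingerisation_warping_general (A B : E →ₗ[ℝ] E) {w : ℝ → E} {t : ℝ}
    (hw : HasDerivAt w (A (w t) + B (w t)) t) (ξ : ℝ) :
    HasDerivAt (fun t' : ℝ => Real.exp (-ξ) • w t')
      (-deriv (fun ξ' : ℝ => A (Real.exp (-ξ') • w t)) ξ + B (Real.exp (-ξ) • w t)) t := by
  rw [(hasDerivAt_linearMap_exp_neg_smul_const A (w t) ξ).deriv, neg_neg, map_smul,
    map_smul, ← smul_add]
  exact hw.const_smul (Real.exp (-ξ))

end Warping

/-- Schrödingerisation warping identity: if `w′(t) = S₁ w(t) + i S₂ w(t)`, then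
`φ(t,ξ) := e^{−ξ} w(t)` satisfies `∂ₜφ = −∂_ξ(S₁ φ) + i S₂ φ`. -/
theorem schrodingerisation_warping (n : ℕ) (hn : 0 < n)
    (S₁ S₂ : Matrix (Fin n) (Fin n) ℂ) (w : ℝ → Fin n → ℂ)
    (hw : ∀ t, HasDerivAt w (S₁.mulVec (w t) + Complex.I • S₂.mulVec (w t)) t) :
    ∀ t ξ : ℝ,
      HasDerivAt (fun t' : ℝ => ((Real.exp (-ξ) : ℝ) : ℂ) • w t')
        (-(deriv (fun ξ' : ℝ => S₁.mulVec (((Real.exp (-ξ') : ℝ) : ℂ) • w t)) ξ)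
          + Complex.I • S₂.mulVec (((Real.exp (-ξ) : ℝ) : ℂ) • w t)) t := fun t ξ =>
  schrodingerisation_warping_general (S₁.mulVecLin.restrictScalars ℝ)
    ((Complex.I • S₂.mulVecLin).restrictScalars ℝ) (hw t) ξ
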